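/- Let ρ ∈ (−1, 1), σ_X > 0, σ_Y > 0 and n ≥ 1, and define p : ℝ → ℝ for x ≠ 0 by p(x) = (n^{(n+1)/2} 2^{(1−n)/2} |x|^{(n−1)/2}) / ((σ_X σ_Y)^{(n+1)/2} √(π(1 − ρ²)) Γ(n/2)) · exp(ρ n x/(σ_X σ_Y (1 − ρ²))) · K_{(n−1)/2}(n|x|/(σ_X σ_Y (1 − ρ²))), where K_ν(y) = ∫₀^∞ e^{−y cosh t} cosh(νt) dt. Then p is nonnegative, integrable on ℝ, and ∫_{−∞}^{∞} p(x) dx = 1. -/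

import Mathlib

open MeasureTheory

/-- The modified Bessel function of the second kind,
`K_ν(y) = ∫₀^∞ e^{−y cosh t} cosh(νt) dt`. -/
noncomputable def besselK (ν y : ℝ) : ℝ :=
  ∫ t in Set.Ioi (0 : ℝ), Real.exp (-(y * Real.cosh t)) * Real.cosh (ν * t)

lemma aux_r_integrable (ν y : ℝ) (hν : -1 < ν) (hy : 0 < y) :
    IntegrableOn (fun r : ℝ => Real.exp (-(r + y ^ 2 / r) / 2) * r ^ (ν - 1)) (Set.Ioi 0) := by
  have h1 : IntegrableOn (fun r : ℝ => (2 / y ^ 2) * (r ^ ν * Real.exp (-(1 / 2) * r ^ (1 : ℝ))))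
      (Set.Ioi 0) :=
    (integrableOn_rpow_mul_exp_neg_mul_rpow hν one_pos (by norm_num)).const_mul _
  refine Integrable.mono' h1 ?_ ?_
  · apply Measurable.aestronglyMeasurable
    fun_prop
  · filter_upwards [ae_restrict_mem measurableSet_Ioi] with r hr
    have hr : 0 < r := hr
    rw [Real.norm_of_nonneg (by positivity), Real.rpow_one]
    have e1 : Real.exp (-(r + y ^ 2 / r) / 2)
        = Real.exp (-(1 / 2) * r) * Real.exp (-(y ^ 2 / (2 * r))) := by
      rw [← Real.exp_add]; congr 1; field_simp; ring
    have e2 : Real.exp (-(y ^ 2 / (2 * r))) ≤ 2 * r / y ^ 2 := by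
      rw [Real.exp_neg]
      have h3 : y ^ 2 / (2 * r) ≤ Real.exp (y ^ 2 / (2 * r)) := by
        have := Real.add_one_le_exp (y ^ 2 / (2 * r)); linarith
      have h4 : 0 < y ^ 2 / (2 * r) := by positivity
      calc (Real.exp (y ^ 2 / (2 * r)))⁻¹ ≤ (y ^ 2 / (2 * r))⁻¹ := inv_anti₀ h4 h3
        _ = _ := by rw [inv_div]
    have e3 : r ^ ν = r ^ (ν - 1) * r := by
      rw [← Real.rpow_add_one hr.ne']; congr 1; ring
    rw [e1, e3]
    calc _ ≤ Real.exp (-(1 / 2) * r) * (2 * r / y ^ 2) * r ^ (ν - 1) := by gcongr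
      _ = _ := by ring

lemma aux_bessel (ν y : ℝ) (hν : -1 < ν) (hy : 0 < y) :
    y ^ ν * besselK ν y
      = 1 / 2 * ∫ r in Set.Ioi (0 : ℝ), Real.exp (-(r + y ^ 2 / r) / 2) * r ^ (ν - 1) := by
  set g : ℝ → ℝ := fun r => Real.exp (-(r + y ^ 2 / r) / 2) * r ^ (ν - 1) with hg
  set A : ℝ → ℝ := fun t => Real.exp (-(y * Real.cosh t)) * Real.exp (ν * t) with hA
  have himg : (fun t : ℝ => y * Real.exp t) '' Set.univ = Set.Ioi 0 := by
    ext r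
    simp only [Set.image_univ, Set.mem_range, Set.mem_Ioi]
    constructor
    · rintro ⟨t, rfl⟩; positivity
    · intro hr
      refine ⟨Real.log (r / y), ?_⟩
      rw [Real.exp_log (by positivity)]; field_simp
  have hinj : Set.InjOn (fun t : ℝ => y * Real.exp t) Set.univ := by
    intro a _ b _ hab
    exact Real.exp_injective (mul_left_cancel₀ hy.ne' hab)
  have hder : ∀ t ∈ (Set.univ : Set ℝ),
      HasDerivWithinAt (fun t : ℝ => y * Real.exp t) (y * Real.exp t) Set.univ t :=
    fun t _ => ((Real.hasDerivAt_exp t).const_mul y).hasDerivWithinAt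
  have hfun : (fun t : ℝ => |y * Real.exp t| • g (y * Real.exp t)) = fun t => y ^ ν * A t := by
    funext t
    have hpos : 0 < y * Real.exp t := by positivity
    have e1 : (y * Real.exp t) ^ (ν - 1) * (y * Real.exp t) = y ^ ν * Real.exp (ν * t) := by
      rw [← Real.rpow_add_one hpos.ne', sub_add_cancel, Real.mul_rpow hy.le (Real.exp_pos t).le,
        ← Real.exp_mul, mul_comm t]
    have e2 : -(y * Real.exp t + y ^ 2 / (y * Real.exp t)) / 2 = -(y * Real.cosh t) := by
      rw [Real.cosh_eq, Real.exp_neg]; field_simp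
    simp only [hg, hA, smul_eq_mul]
    rw [abs_of_pos hpos, e2]
    linear_combination Real.exp (-(y * Real.cosh t)) * e1
  have hgint : IntegrableOn g (Set.Ioi 0) := aux_r_integrable ν y hν hy
  have hyν : y ^ ν ≠ 0 := (Real.rpow_pos_of_pos hy ν).ne'
  have hAint : Integrable A := by
    rw [← himg, integrableOn_image_iff_integrableOn_abs_deriv_smul MeasurableSet.univ hder hinj,
      hfun, integrableOn_univ] at hgint
    have := hgint.const_mul (y ^ ν)⁻¹
    refine this.congr (Filter.Eventually.of_forall fun t => ?_)
    simp only []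
    field_simp
  have hI : ∫ r in Set.Ioi (0 : ℝ), g r = y ^ ν * ∫ t, A t := by
    rw [← himg, integral_image_eq_integral_abs_deriv_smul MeasurableSet.univ hder hinj,
      hfun, setIntegral_univ, integral_const_mul]
  have hK : 2 * besselK ν y = ∫ t, A t := by
    unfold besselK
    rw [← integral_comp_abs (f := fun t => Real.exp (-(y * Real.cosh t)) * Real.cosh (ν * t))]
    have : ∀ t : ℝ, Real.exp (-(y * Real.cosh |t|)) * Real.cosh (ν * |t|)
        = 1 / 2 * (A t + A (-t)) := by
      intro t
      have : Real.cosh (ν * |t|) = Real.cosh (ν * t) := by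
        rw [← Real.cosh_abs (ν * |t|), ← Real.cosh_abs (ν * t), abs_mul, abs_mul, abs_abs]
      rw [this, Real.cosh_abs, Real.cosh_eq (ν * t)]
      simp only [hA, Real.cosh_neg, mul_neg]
      ring
    simp_rw [this]
    rw [integral_const_mul, integral_add hAint hAint.comp_neg, integral_neg_eq_self A]
    ring
  rw [hI, ← hK]; ring

lemma aux_gauss (ρ r : ℝ) (hr : 0 < r) :
    Integrable (fun u : ℝ => Real.exp (ρ * u - u ^ 2 / (2 * r))) ∧
    ∫ u : ℝ, Real.exp (ρ * u - u ^ 2 / (2 * r))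
      = Real.sqrt (2 * Real.pi) * (r ^ (1 / 2 : ℝ) * Real.exp (ρ ^ 2 * r / 2)) := by
  have e : (fun u : ℝ => Real.exp (ρ * u - u ^ 2 / (2 * r)))
      = fun u => Real.exp (ρ ^ 2 * r / 2) * Real.exp (-(1 / (2 * r)) * (u - ρ * r) ^ 2) := by
    funext u
    rw [← Real.exp_add]; congr 1; field_simp; ring
  have hb : 0 < 1 / (2 * r) := by positivity
  rw [e]
  refine ⟨((integrable_exp_neg_mul_sq hb).comp_sub_right (ρ * r)).const_mul _, ?_⟩
  rw [integral_const_mul,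
    integral_sub_right_eq_self (fun u => Real.exp (-(1 / (2 * r)) * u ^ 2)) (ρ * r),
    integral_gaussian, ← Real.sqrt_eq_rpow,
    show Real.pi / (1 / (2 * r)) = (2 * Real.pi) * r by field_simp,
    Real.sqrt_mul (by positivity)]
  ring

lemma aux_main (ν ρ : ℝ) (hν : -(1 / 2) < ν) (hρ : 0 < 1 - ρ ^ 2) :
    Integrable (fun u : ℝ => ∫ r in Set.Ioi (0 : ℝ),
      Real.exp (ρ * u - u ^ 2 / (2 * r)) * (r ^ (ν - 1) * Real.exp (-(r / 2)))) ∧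
    ∫ u : ℝ, ∫ r in Set.Ioi (0 : ℝ),
      Real.exp (ρ * u - u ^ 2 / (2 * r)) * (r ^ (ν - 1) * Real.exp (-(r / 2)))
      = Real.sqrt (2 * Real.pi) * ((2 / (1 - ρ ^ 2)) ^ (ν + 1 / 2) * Real.Gamma (ν + 1 / 2)) := by
  set F : ℝ → ℝ → ℝ := fun u r =>
    Real.exp (ρ * u - u ^ 2 / (2 * r)) * (r ^ (ν - 1) * Real.exp (-(r / 2))) with hF
  have hsec : ∀ r : ℝ, 0 < r → ∫ u, F u r = Real.sqrt (2 * Real.pi) *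
      (r ^ ((ν + 1 / 2) - 1) * Real.exp (-((1 - ρ ^ 2) / 2 * r))) := by
    intro r hr
    simp only [hF]
    rw [integral_mul_const, (aux_gauss ρ r hr).2]
    have e1 : r ^ ((ν + 1 / 2) - 1) = r ^ (1 / 2 : ℝ) * r ^ (ν - 1) := by
      rw [← Real.rpow_add hr]; congr 1; ring
    have e2 : Real.exp (-((1 - ρ ^ 2) / 2 * r))
        = Real.exp (ρ ^ 2 * r / 2) * Real.exp (-(r / 2)) := by
      rw [← Real.exp_add]; congr 1; ring
    rw [e1, e2]; ring
  have hint : Integrable (Function.uncurry F)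
      ((volume : Measure ℝ).prod (volume.restrict (Set.Ioi (0 : ℝ)))) := by
    rw [integrable_prod_iff']
    · constructor
      · filter_upwards [ae_restrict_mem measurableSet_Ioi] with r hr
        exact (aux_gauss ρ r hr).1.mul_const (r ^ (ν - 1) * Real.exp (-(r / 2)))
      · have h1 : IntegrableOn (fun r : ℝ => Real.sqrt (2 * Real.pi) *
            (r ^ ((ν + 1 / 2) - 1) * Real.exp (-((1 - ρ ^ 2) / 2) * r ^ (1 : ℝ)))) (Set.Ioi 0) :=
          (integrableOn_rpow_mul_exp_neg_mul_rpow (by linarith) one_pos (by linarith)).const_mul _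
        refine Integrable.congr h1 ?_
        filter_upwards [ae_restrict_mem measurableSet_Ioi] with r hr
        have hr : 0 < r := hr
        have : ∀ u, ‖Function.uncurry F (u, r)‖ = F u r := fun u => by
          simp only [Function.uncurry, hF]
          rw [Real.norm_of_nonneg (by positivity)]
        simp_rw [this]
        rw [hsec r hr, Real.rpow_one, neg_mul]
    · apply Measurable.aestronglyMeasurable
      simp only [hF, Function.uncurry_def]
      fun_prop
  refine ⟨hint.integral_prod_left, ?_⟩
  rw [integral_integral_swap hint, setIntegral_congr_fun measurableSet_Ioi (fun r hr => hsec r hr),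
    integral_const_mul, Real.integral_rpow_mul_exp_neg_mul_Ioi (by linarith) (by linarith),
    one_div_div]

lemma besselK_nonneg (ν y : ℝ) : 0 ≤ besselK ν y :=
  integral_nonneg fun t => mul_nonneg (Real.exp_pos _).le (Real.cosh_pos _).le

/-- The claimed density `p` of the mean of `n` independent products of zero mean correlated
normal random variables (variances `σ_X², σ_Y²`, correlation `ρ`) is nonnegative, integrable
on `ℝ`, and integrates to `1`. -/
theorem density_nonneg_integrable_integral_one
    (ρ : ℝ) (hρ : ρ ∈ Set.Ioo (-1 : ℝ) 1)
    (σX σY : ℝ) (hσX : 0 < σX) (hσY : 0 < σY) (n : ℕ) (hn : 1 ≤ n)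
    (p : ℝ → ℝ)
    (hp : ∀ x : ℝ, x ≠ 0 → p x =
      (n : ℝ) ^ (((n : ℝ) + 1) / 2) * 2 ^ ((1 - (n : ℝ)) / 2) * |x| ^ (((n : ℝ) - 1) / 2) /
        ((σX * σY) ^ (((n : ℝ) + 1) / 2) * Real.sqrt (Real.pi * (1 - ρ ^ 2)) *
          Real.Gamma ((n : ℝ) / 2)) *
        Real.exp (ρ * n * x / (σX * σY * (1 - ρ ^ 2))) *
        besselK (((n : ℝ) - 1) / 2) (n * |x| / (σX * σY * (1 - ρ ^ 2)))) :
    (∀ x : ℝ, x ≠ 0 → 0 ≤ p x) ∧ Integrable p volume ∧ ∫ x : ℝ, p x = 1 := by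
  have hρ2 : 0 < 1 - ρ ^ 2 := by nlinarith [hρ.1, hρ.2]
  have hn0 : (0 : ℝ) < n := by exact_mod_cast hn
  have hn1 : (1 : ℝ) ≤ n := by exact_mod_cast hn
  have hG : 0 < Real.Gamma ((n : ℝ) / 2) := Real.Gamma_pos_of_pos (by positivity)
  have hs : 0 < σX * σY := by positivity
  set s := σX * σY with hsdef
  set w := 1 - ρ ^ 2 with hw
  refine ⟨fun x hx => ?_, ?_⟩
  · rw [hp x hx]
    have := besselK_nonneg (((n : ℝ) - 1) / 2) (n * |x| / (s * w))
    positivity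
  set ν : ℝ := ((n : ℝ) - 1) / 2 with hν
  have hνn : 0 ≤ ν := by rw [hν]; linarith
  set c : ℝ := n / (s * w) with hc
  have hcpos : 0 < c := by positivity
  set H : ℝ → ℝ := fun u => ∫ r in Set.Ioi (0 : ℝ),
      Real.exp (ρ * u - u ^ 2 / (2 * r)) * (r ^ (ν - 1) * Real.exp (-(r / 2))) with hH
  obtain ⟨hHi, hHe⟩ := aux_main ν ρ (by linarith) hρ2
  set C : ℝ := (n : ℝ) ^ (((n : ℝ) + 1) / 2) * 2 ^ ((1 - (n : ℝ)) / 2) /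
        (s ^ (((n : ℝ) + 1) / 2) * Real.sqrt (Real.pi * w) *
          Real.Gamma ((n : ℝ) / 2)) * (c ^ ν)⁻¹ * (1 / 2) with hC
  have hpe : p =ᵐ[volume] fun x => C * H (c * x) := by
    filter_upwards [Measure.ae_ne volume (0 : ℝ)] with x hx
    rw [hp x hx]
    have hax : 0 < |x| := abs_pos.mpr hx
    have hb := aux_bessel ν (c * |x|) (by linarith) (by positivity)
    have hHx : H (c * x) = Real.exp (ρ * (c * x)) * ∫ r in Set.Ioi (0 : ℝ),
        Real.exp (-(r + (c * |x|) ^ 2 / r) / 2) * r ^ (ν - 1) := by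
      rw [← integral_const_mul]
      refine setIntegral_congr_fun measurableSet_Ioi fun r hr => ?_
      have hr : 0 < r := hr
      have e : Real.exp (ρ * (c * x) - (c * x) ^ 2 / (2 * r)) * Real.exp (-(r / 2))
          = Real.exp (ρ * (c * x)) * Real.exp (-(r + (c * |x|) ^ 2 / r) / 2) := by
        rw [← Real.exp_add, ← Real.exp_add, mul_pow c |x|, sq_abs]
        congr 1; field_simp; ring
      linear_combination r ^ (ν - 1) * e
    have hy : n * |x| / (s * w) = c * |x| := by rw [hc]; ring
    have hz : ρ * n * x / (s * w) = ρ * (c * x) := by rw [hc]; ring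
    rw [hHx, hy, hz]
    rw [Real.mul_rpow hcpos.le hax.le] at hb
    have hcν : 0 < c ^ ν := Real.rpow_pos_of_pos hcpos ν
    have hb' : |x| ^ ν * besselK ν (c * |x|) = (c ^ ν)⁻¹ * (1 / 2) * ∫ r in Set.Ioi (0 : ℝ),
        Real.exp (-(r + (c * |x|) ^ 2 / r) / 2) * r ^ (ν - 1) := by
      rw [mul_assoc, ← hb]; field_simp
    rw [hC]
    linear_combination ((n : ℝ) ^ (((n : ℝ) + 1) / 2) * 2 ^ ((1 - (n : ℝ)) / 2) /
        (s ^ (((n : ℝ) + 1) / 2) * Real.sqrt (Real.pi * w) *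
          Real.Gamma ((n : ℝ) / 2)) * Real.exp (ρ * (c * x))) * hb'
  refine ⟨((hHi.comp_mul_left' hcpos.ne').const_mul C).congr hpe.symm, ?_⟩
  rw [integral_congr_ae hpe, integral_const_mul, Measure.integral_comp_mul_left H c, hHe,
    smul_eq_mul, abs_of_pos (by positivity)]
  have a1 : ν + 1 / 2 = (n : ℝ) / 2 := by rw [hν]; ring
  have a2 : ((n : ℝ) + 1) / 2 = ν + 1 := by rw [hν]; ring
  have a3 : (1 - (n : ℝ)) / 2 = -ν := by rw [hν]; ring
  rw [hC, ← hw, ← a1, a2, a3]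
  rw [← a1] at hG
  rw [Real.sqrt_mul Real.pi_pos.le, Real.sqrt_mul (by norm_num : (0 : ℝ) ≤ 2),
    Real.div_rpow (by norm_num) hρ2.le, Real.rpow_neg (by norm_num), hc,
    Real.div_rpow hn0.le (by positivity), Real.mul_rpow hs.le hρ2.le,
    Real.rpow_add_one hn0.ne', Real.rpow_add_one hs.ne',
    Real.rpow_add (by norm_num : (0 : ℝ) < 2), Real.rpow_add hρ2,
    ← Real.sqrt_eq_rpow, ← Real.sqrt_eq_rpow]
  have b1 : 0 < (n : ℝ) ^ ν := by positivity
  have b2 : 0 < s ^ ν := by positivity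
  have b3 : 0 < w ^ ν := by positivity
  have b4 : (0 : ℝ) < 2 ^ ν := by positivity
  have b5 : 0 < √w := by positivity
  have b6 : 0 < √Real.pi := Real.sqrt_pos.mpr Real.pi_pos
  have b7 : √w ^ 2 = w := Real.sq_sqrt hρ2.le
  have b8 : √(2 : ℝ) ^ 2 = 2 := Real.sq_sqrt (by norm_num)
  field_simp
  simp only [b7, b8]
  try field_simp
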